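/- Let 0 < α ≤ 1, let h > 0, let N ≥ 2 be an integer, let x_j = a + jh (j = 0,…,N), and let p, q, r be real-valued mesh functions with p(x_i) > 0 and r(x_i) > 0 for all i. Suppose y is nontrivial, satisfies y(x_0) = y(x_N) = 0, and maximizes the Rayleigh quotient R[y] = J[y]/I[y] over all nontrivial mesh functions vanishing at x_0 and x_N. Then R[y] equals the largest eigenvalue λ_{N−1} of the discrete fractional Sturm–Liouville problem ₖΔ^α_N(p(x_k)·₀Δ^α_k y(x_k)) + q(x_k) y(x_k) = λ r(x_k) y(x_k), k = 1,…,N−1, with y(x_0) = y(x_N) = 0. -/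

import Mathlib

/-!
Summation by parts (`sum_mul_glBackDiff`) makes the Sturm–Liouville operator the gradient of `J`: for
mesh functions vanishing at the endpoints, its pairing with `z` is the symmetric bilinear form
`slBilin` that polarizes `J` (`slBilin_eq`). Hence the Rayleigh quotient of an eigenfunction is its
eigenvalue (`slJ_eq_of_eigenpair`), so every eigenvalue is at most the maximum `R` of the quotient.

Conversely, `J - R I` is a nonpositive quadratic form vanishing at the maximizer `y`, so its first
variation at `y` is zero in every admissible direction. Taking the direction to be the indicator
of a single interior mesh point gives the equation there, so `R` is itself an eigenvalue.
-/

/-- The Grünwald–Letnikov coefficients `a_i^{(α)} = (-1)^i α(α-1)⋯(α-i+1)/i!`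
(with `a_0^{(α)} = 1`). -/
noncomputable def acoef (α : ℝ) (i : ℕ) : ℝ :=
  (-1 : ℝ) ^ i * (∏ j ∈ Finset.range i, (α - (j : ℝ))) / (Nat.factorial i)

/-- The backward fractional difference of order `α` on a uniform mesh with step `h`,
of a mesh function `f` (where `f k` stands for `f(x_k)`, `x_k = a + k h`):
`₀Δ^α_k f(x_k) = h^{-α} Σ_{i=0}^{k} a_i^{(α)} f(x_{k-i})`. -/
noncomputable def glBackDiff (α h : ℝ) (f : ℕ → ℝ) (k : ℕ) : ℝ :=
  h ^ (-α) * ∑ i ∈ Finset.range (k + 1), acoef α i * f (k - i)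

/-- The forward fractional difference of order `α` on a uniform mesh with step `h`
and `N + 1` mesh points: `ₖΔ^α_N f(x_k) = h^{-α} Σ_{i=0}^{N-k} a_i^{(α)} f(x_{k+i})`. -/
noncomputable def glFwdDiff (α h : ℝ) (N : ℕ) (f : ℕ → ℝ) (k : ℕ) : ℝ :=
  h ^ (-α) * ∑ i ∈ Finset.range (N - k + 1), acoef α i * f (k + i)

/-- `y` satisfies the discrete fractional Sturm–Liouville equation
`ₖΔ^α_N (p(x_k) ₀Δ^α_k y(x_k)) + q(x_k) y(x_k) = λ r(x_k) y(x_k)` for `k = 1, …, N-1`. -/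
def SLSolves (α h : ℝ) (N : ℕ) (p q r : ℕ → ℝ) (lam : ℝ) (y : ℕ → ℝ) : Prop :=
  ∀ k, 1 ≤ k → k ≤ N - 1 →
    glFwdDiff α h N (fun j => p j * glBackDiff α h y j) k + q k * y k = lam * (r k * y k)

/-- `(lam, y)` is an eigenpair of the discrete fractional Sturm–Liouville problem:
`y` is a nontrivial mesh function satisfying the equation together with the
boundary conditions `y(x_0) = y(x_N) = 0`. -/
def IsSLEigenpair (α h : ℝ) (N : ℕ) (p q r : ℕ → ℝ) (lam : ℝ) (y : ℕ → ℝ) : Prop :=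
  y 0 = 0 ∧ y N = 0 ∧ (∃ k ≤ N, y k ≠ 0) ∧ SLSolves α h N p q r lam y

/-- The functional `J[y] = Σ_{k=1}^{N} [p(x_k) (₀Δ^α_k y(x_k))² + q(x_k) y(x_k)²]`. -/
noncomputable def slJ (α h : ℝ) (N : ℕ) (p q : ℕ → ℝ) (y : ℕ → ℝ) : ℝ :=
  ∑ k ∈ Finset.Icc 1 N, (p k * (glBackDiff α h y k) ^ 2 + q k * (y k) ^ 2)

/-- The functional `I[y] = Σ_{k=1}^{N} r(x_k) y(x_k)²`. -/
noncomputable def slI (N : ℕ) (r : ℕ → ℝ) (y : ℕ → ℝ) : ℝ :=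
  ∑ k ∈ Finset.Icc 1 N, r k * (y k) ^ 2

/-- Backward and forward fractional differences are adjoint to each other (summation by parts). -/
lemma sum_mul_glBackDiff (α h : ℝ) (N : ℕ) (f z : ℕ → ℝ) :
    ∑ k ∈ Finset.range (N + 1), f k * glBackDiff α h z k =
      ∑ k ∈ Finset.range (N + 1), glFwdDiff α h N f k * z k := by
  simp only [glBackDiff, glFwdDiff, Finset.mul_sum, Finset.sum_mul]
  -- The index pairs `(k, i)` and `(k - i, i)` label the same term on the two sides.
  rw [Finset.sum_sigma', Finset.sum_sigma']
  refine Finset.sum_bij' (fun x _ => ⟨x.1 - x.2, x.2⟩) (fun x _ => ⟨x.1 + x.2, x.2⟩) ?_ ?_ ?_ ?_ ?_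
  · rintro ⟨k, i⟩ hx
    simp only [Finset.mem_sigma, Finset.mem_range] at hx ⊢
    omega
  · rintro ⟨k, i⟩ hx
    simp only [Finset.mem_sigma, Finset.mem_range] at hx ⊢
    omega
  · rintro ⟨k, i⟩ hx
    simp only [Finset.mem_sigma, Finset.mem_range] at hx
    have hki : k - i + i = k := by omega
    simp only [hki]
  · rintro ⟨k, i⟩ hx
    simp
  · rintro ⟨k, i⟩ hx
    simp only [Finset.mem_sigma, Finset.mem_range] at hx
    have hki : k - i + i = k := by omega
    simp only [hki]
    ring

lemma sum_Icc_one_eq_sum_range (N : ℕ) (g : ℕ → ℝ) (g_zero : g 0 = 0) :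
    ∑ k ∈ Finset.Icc 1 N, g k = ∑ k ∈ Finset.range (N + 1), g k := by
  refine Finset.sum_subset ?_ ?_
  · intro k hk
    simp only [Finset.mem_Icc, Finset.mem_range] at hk ⊢
    omega
  · intro k hk hkI
    simp only [Finset.mem_Icc, Finset.mem_range] at hk hkI
    have : k = 0 := by omega
    rw [this, g_zero]

lemma glBackDiff_add_mul (α h t : ℝ) (y z : ℕ → ℝ) (k : ℕ) :
    glBackDiff α h (fun j => y j + t * z j) k = glBackDiff α h y k + t * glBackDiff α h z k := by
  simp only [glBackDiff, mul_add, Finset.sum_add_distrib, Finset.mul_sum]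
  congr 1
  exact Finset.sum_congr rfl fun i _ => by ring

lemma glBackDiff_eq_zero (α h : ℝ) (y : ℕ → ℝ) (k : ℕ) (hy : ∀ j ≤ k, y j = 0) :
    glBackDiff α h y k = 0 := by
  simp [glBackDiff, hy]

/-- The symmetric bilinear form polarizing the quadratic form `J`. -/
noncomputable def slBilin (α h : ℝ) (N : ℕ) (p q y z : ℕ → ℝ) : ℝ :=
  ∑ k ∈ Finset.Icc 1 N, (p k * glBackDiff α h y k * glBackDiff α h z k + q k * y k * z k)

/-- The weak form of the Sturm–Liouville operator: pairing it with `z` gives `slBilin`. -/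
lemma slBilin_eq (α h : ℝ) (N : ℕ) (p q y z : ℕ → ℝ) (hy0 : y 0 = 0) (hz0 : z 0 = 0) :
    slBilin α h N p q y z = ∑ k ∈ Finset.Icc 1 N,
      (glFwdDiff α h N (fun j => p j * glBackDiff α h y j) k + q k * y k) * z k := by
  have hD : glBackDiff α h y 0 = 0 := glBackDiff_eq_zero α h y 0 (by simpa using hy0)
  rw [slBilin, sum_Icc_one_eq_sum_range _ _ (by simp [hD, hy0]),
    sum_Icc_one_eq_sum_range _ _ (by simp [hz0]), Finset.sum_add_distrib,
    sum_mul_glBackDiff α h N (fun j => p j * glBackDiff α h y j) z, ← Finset.sum_add_distrib]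
  exact Finset.sum_congr rfl fun k _ => by ring

lemma slJ_add_mul (α h t : ℝ) (N : ℕ) (p q y z : ℕ → ℝ) :
    slJ α h N p q (fun j => y j + t * z j) =
      slJ α h N p q y + 2 * t * slBilin α h N p q y z + t ^ 2 * slJ α h N p q z := by
  simp only [slJ, slBilin, glBackDiff_add_mul, Finset.mul_sum, ← Finset.sum_add_distrib]
  exact Finset.sum_congr rfl fun k _ => by ring

lemma slI_add_mul (t : ℝ) (N : ℕ) (r y z : ℕ → ℝ) :
    slI N r (fun j => y j + t * z j) =
      slI N r y + 2 * t * (∑ k ∈ Finset.Icc 1 N, r k * y k * z k) + t ^ 2 * slI N r z := by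
  simp only [slI, Finset.mul_sum, ← Finset.sum_add_distrib]
  exact Finset.sum_congr rfl fun k _ => by ring

lemma slI_pos (N : ℕ) (r y : ℕ → ℝ) (hr : ∀ i ≤ N, 0 < r i) (hy0 : y 0 = 0)
    (hy : ∃ k ≤ N, y k ≠ 0) : 0 < slI N r y := by
  obtain ⟨k, hkN, hk⟩ := hy
  have hk0 : k ≠ 0 := by
    rintro rfl
    exact hk hy0
  refine Finset.sum_pos' (fun i hi => ?_) ⟨k, ?_, ?_⟩
  · exact mul_nonneg (hr i (Finset.mem_Icc.1 hi).2).le (sq_nonneg _)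
  · exact Finset.mem_Icc.2 ⟨by omega, hkN⟩
  · exact mul_pos (hr k hkN) (by positivity)

/-- The Rayleigh quotient of an eigenfunction is its eigenvalue. -/
lemma slJ_eq_of_eigenpair (α h : ℝ) (N : ℕ) (p q r w : ℕ → ℝ) (lam : ℝ)
    (hw : IsSLEigenpair α h N p q r lam w) : slJ α h N p q w = lam * slI N r w := by
  obtain ⟨hw0, hwN, -, hsol⟩ := hw
  have hJ : slJ α h N p q w = slBilin α h N p q w w :=
    Finset.sum_congr rfl fun k _ => by ring
  rw [hJ, slBilin_eq α h N p q w w hw0 hw0, slI, Finset.mul_sum]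
  refine Finset.sum_congr rfl fun k hk => ?_
  rw [Finset.mem_Icc] at hk
  rcases eq_or_ne k N with rfl | hkN
  · simp [hwN]
  · rw [hsol k hk.1 (by omega)]
    ring

lemma eq_zero_of_forall_quadratic_nonpos (b c : ℝ) (hbc : ∀ t : ℝ, 2 * t * b + t ^ 2 * c ≤ 0) :
    b = 0 := by
  by_contra hb
  -- For `t = b / (|c| + 1)` the linear term dominates.
  have hs : 0 < |c| + 1 := by positivity
  have ht := hbc (b / (|c| + 1))
  have hexp : 2 * (b / (|c| + 1)) * b + (b / (|c| + 1)) ^ 2 * c =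
      b ^ 2 * (2 * (|c| + 1) + c) / (|c| + 1) ^ 2 := by
    field_simp
  rw [hexp] at ht
  have hpos : 0 < 2 * (|c| + 1) + c := by linarith [neg_abs_le c, abs_nonneg c]
  have : 0 < b ^ 2 * (2 * (|c| + 1) + c) / (|c| + 1) ^ 2 := by positivity
  linarith

/-- if a nontrivial mesh function `y` with `y(x_0) = y(x_N) = 0`
maximizes the Rayleigh quotient `R[y] = J[y]/I[y]` over all nontrivial mesh
functions vanishing at `x_0` and `x_N`, then `R[y]` equals the largest
eigenvalue `λ_{N-1}` of the discrete fractional Sturm–Liouville problem. -/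
theorem discrete_SL_rayleigh_max (a : ℝ) (α h : ℝ)
    (hα0 : 0 < α) (hα1 : α ≤ 1) (hh : 0 < h) (N : ℕ) (hN : 2 ≤ N) (p q r : ℕ → ℝ)
    (hp : ∀ i ≤ N, 0 < p i) (hr : ∀ i ≤ N, 0 < r i)
    (y : ℕ → ℝ) (hy0 : y 0 = 0) (hyN : y N = 0) (hynz : ∃ k ≤ N, y k ≠ 0)
    (hmax : ∀ z : ℕ → ℝ, z 0 = 0 → z N = 0 → (∃ k ≤ N, z k ≠ 0) →
      slJ α h N p q z / slI N r z ≤ slJ α h N p q y / slI N r y)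
    (lamTop : ℝ)
    (hTop : ∃ w, IsSLEigenpair α h N p q r lamTop w)
    (hlargest : ∀ μ, (∃ w, IsSLEigenpair α h N p q r μ w) → μ ≤ lamTop) :
    slJ α h N p q y / slI N r y = lamTop := by
  set R := slJ α h N p q y / slI N r y with hR
  have hIy := slI_pos N r y hr hy0 hynz
  have hJy : slJ α h N p q y = R * slI N r y := by
    rw [hR, div_mul_cancel₀ _ (ne_of_gt hIy)]
  -- The trivial `z` is included, so that the variation below needs no case distinction.
  have hle : ∀ z : ℕ → ℝ, z 0 = 0 → z N = 0 → slJ α h N p q z ≤ R * slI N r z := by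
    intro z hz0 hzN
    by_cases hz : ∃ k ≤ N, z k ≠ 0
    · exact (div_le_iff₀ (slI_pos N r z hr hz0 hz)).1 (hmax z hz0 hzN hz)
    · push Not at hz
      have hJ : slJ α h N p q z = 0 := Finset.sum_eq_zero fun k hk => by
        have hkN := (Finset.mem_Icc.1 hk).2
        rw [glBackDiff_eq_zero α h z k fun j hj => hz j (hj.trans hkN), hz k hkN]
        ring
      have hI : slI N r z = 0 := Finset.sum_eq_zero fun k hk => by
        rw [hz k (Finset.mem_Icc.1 hk).2]
        ring
      rw [hJ, hI, mul_zero]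
  apply le_antisymm
  · refine hlargest R ⟨y, hy0, hyN, hynz, fun k hk1 hkN => ?_⟩
    let z : ℕ → ℝ := Pi.single k 1
    have hz0 : z 0 = 0 := Pi.single_eq_of_ne (by omega) 1
    have hzN : z N = 0 := Pi.single_eq_of_ne (by omega) 1
    have hmem : k ∈ Finset.Icc 1 N := Finset.mem_Icc.2 ⟨hk1, by omega⟩
    have hvar := eq_zero_of_forall_quadratic_nonpos
      (slBilin α h N p q y z - R * ∑ j ∈ Finset.Icc 1 N, r j * y j * z j)
      (slJ α h N p q z - R * slI N r z) fun t => by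
        have ht := hle (fun j => y j + t * z j) (by simp [hy0, hz0]) (by simp [hyN, hzN])
        rw [slJ_add_mul, slI_add_mul, hJy] at ht
        linarith
    have hpick : ∀ g : ℕ → ℝ, ∑ j ∈ Finset.Icc 1 N, g j * z j = g k := by
      intro g
      rw [Finset.sum_eq_single_of_mem k hmem fun j _ hj => by simp [z, Pi.single_eq_of_ne hj]]
      simp [z]
    rw [slBilin_eq α h N p q y z hy0 hz0, hpick (fun j => r j * y j),
      hpick (fun j => glFwdDiff α h N (fun j => p j * glBackDiff α h y j) j + q j * y j)] at hvar
    exact sub_eq_zero.1 hvar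
  · obtain ⟨w, hw⟩ := hTop
    have hIw := slI_pos N r w hr hw.1 hw.2.2.1
    have hJw := hle w hw.1 hw.2.1
    rw [slJ_eq_of_eigenpair α h N p q r w lamTop hw] at hJw
    exact le_of_mul_le_mul_right hJw hIw
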